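/- Let k be a positive integer and t ≥ 4/3 with tk an integer. Define ν := √(t(t−1)) − (t−1), θ₁ := ν(1−ν), θ₂ := 0.5 − θ₁, and θ₃ := ν²/(2(t−1)). Let 𝒢 be a partition of {1,…,n} into g disjoint nonempty subsets, let μ > 0 with μ√g < 1−μ, set γ := μ√g/(1−μ) and ρ̄ := (1−γ)/(1+γ). Suppose A ∈ ℝ^{m×n} satisfies the RIP of order tk with constant δ := δ_{tk} satisfying δ < ρ̄²θ₁/(θ₃ + ρ̄²θ₂). Then there exist constants C₀ and C₁ (depending on A, k, t, μ, g but not on x or η) such that whenever y = Ax + η with ‖η‖₂ ≤ ε and x̂ is a minimizer of ‖z‖_{SGL,μ} over {z : ‖Az − y‖₂ ≤ ε}, one has ‖x̂ − x‖₁ ≤ C₀·σ_k(x, ‖·‖₁) + C₁·ε. -/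

import Mathlib

/-- The ℓ¹-norm of a vector in ℝⁿ. -/
noncomputable def l1 {n : ℕ} (x : Fin n → ℝ) : ℝ := ∑ i, |x i|

/-- The ℓ²-norm of a vector in ℝⁿ. -/
noncomputable def l2 {n : ℕ} (x : Fin n → ℝ) : ℝ := Real.sqrt (∑ i, (x i) ^ 2)

/-- The ℓᵖ-norm of a vector in ℝⁿ. -/
noncomputable def lpNorm {n : ℕ} (p : ℝ) (x : Fin n → ℝ) : ℝ := (∑ i, |x i| ^ p) ^ (1 / p)

/-- A vector is `k`-sparse if it has at most `k` nonzero components. -/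
def IsSparse {n : ℕ} (k : ℕ) (x : Fin n → ℝ) : Prop :=
  (Finset.univ.filter (fun i => x i ≠ 0)).card ≤ k

/-- The `k`-sparsity index of `x` with respect to the ℓ¹-norm. -/
noncomputable def sigma1 {n : ℕ} (k : ℕ) (x : Fin n → ℝ) : ℝ :=
  sInf ((fun z => l1 (x - z)) '' {z | IsSparse k z})

/-- The `k`-sparsity index of `x` with respect to the ℓ²-norm. -/
noncomputable def sigma2 {n : ℕ} (k : ℕ) (x : Fin n → ℝ) : ℝ :=
  sInf ((fun z => l2 (x - z)) '' {z | IsSparse k z})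

/-- The vector agreeing with `x` on `S` and zero elsewhere. -/
def proj {n : ℕ} (S : Finset (Fin n)) (x : Fin n → ℝ) : Fin n → ℝ :=
  fun i => if i ∈ S then x i else 0

/-- `G` is a partition of `{1,…,n}` into `g` disjoint nonempty subsets. -/
def IsPartition {n g : ℕ} (G : Fin g → Finset (Fin n)) : Prop :=
  (∀ i, (G i).Nonempty) ∧ (∀ i j, i ≠ j → Disjoint (G i) (G j)) ∧
    (∀ x : Fin n, ∃ i, x ∈ G i)

/-- The Sparse Group LASSO norm associated to the partition `G` with parameter `μ`. -/
noncomputable def sglNorm {n g : ℕ} (G : Fin g → Finset (Fin n)) (μ : ℝ) (z : Fin n → ℝ) : ℝ :=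
  ∑ i, ((1 - μ) * l1 (proj (G i) z) + μ * l2 (proj (G i) z))

/-- `A` satisfies the Restricted Isometry Property of order `k` with constant `δ`. -/
def RIP {m n : ℕ} (A : Matrix (Fin m) (Fin n) ℝ) (k : ℕ) (δ : ℝ) : Prop :=
  ∀ u : Fin n → ℝ, IsSparse k u →
    (1 - δ) * (l2 u) ^ 2 ≤ (l2 (A.mulVec u)) ^ 2 ∧
      (l2 (A.mulVec u)) ^ 2 ≤ (1 + δ) * (l2 u) ^ 2

/-- `A` satisfies the ℓ₂ robust null space property of order `k` with constants `ρ`, `τ`. -/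
def RNSP {m n : ℕ} (A : Matrix (Fin m) (Fin n) ℝ) (k : ℕ) (ρ τ : ℝ) : Prop :=
  ∀ h : Fin n → ℝ, ∀ S : Finset (Fin n), S.card ≤ k →
    l2 (proj S h) ≤ (ρ / Real.sqrt k) * l1 (proj Sᶜ h) +
      (τ / Real.sqrt k) * l2 (A.mulVec h)


lemma aux_maxlin {ι : Type*} [DecidableEq ι] (I : Finset ι) (c w : ι → ℝ) (s : ℕ)
    (h0 : ∀ i ∈ I, 0 ≤ w i) (h1 : ∀ i ∈ I, w i ≤ 1) (hs : ∑ i ∈ I, w i ≤ s) :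
    ∃ T ⊆ I, T.card ≤ s ∧ ∑ i ∈ I, c i * w i ≤ ∑ i ∈ T, c i := by
  obtain ⟨T, hT, hmax⟩ := Finset.exists_max_image (I.powerset.filter (fun T => T.card ≤ s))
    (fun T => ∑ i ∈ T, c i) ⟨∅, by simp⟩
  simp only [Finset.mem_filter, Finset.mem_powerset] at hT hmax
  refine ⟨T, hT.1, hT.2, ?_⟩
  have hpos : ∀ j ∈ T, 0 ≤ c j := by
    intro j hj
    have := hmax (T.erase j) ⟨(Finset.erase_subset _ _).trans hT.1,
      (Finset.card_le_card (Finset.erase_subset _ _)).trans hT.2⟩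
    have h2 := Finset.sum_erase_add T c hj
    linarith
  have hex : ∃ θ : ℝ, 0 ≤ θ ∧ (∀ j ∈ T, θ ≤ c j) ∧ (∀ i ∈ I, i ∉ T → (c i - θ) * w i ≤ 0) ∧
      θ * (s - T.card) = 0 := by
    by_cases hc : T.card < s
    · refine ⟨0, le_rfl, hpos, ?_, by simp⟩
      intro i hi hiT
      have := hmax (insert i T) ⟨Finset.insert_subset hi hT.1, by
        rw [Finset.card_insert_of_notMem hiT]; omega⟩
      rw [Finset.sum_insert hiT] at this
      have h3 : c i ≤ 0 := by linarith
      have := h0 i hi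
      nlinarith
    · have hcs : T.card = s := le_antisymm hT.2 (not_lt.mp hc)
      rcases T.eq_empty_or_nonempty with he | hne
      · subst he
        refine ⟨0, le_rfl, by simp, ?_, by simp⟩
        intro i hi _
        have hs0 : (s : ℝ) = 0 := by rw [← hcs]; simp
        have : w i ≤ ∑ i ∈ I, w i := Finset.single_le_sum h0 hi
        have : w i = 0 := le_antisymm (by linarith) (h0 i hi)
        simp [this]
      · obtain ⟨j, hj, hjmin⟩ := Finset.exists_min_image T c hne
        refine ⟨c j, hpos j hj, hjmin, ?_, by rw [hcs]; simp⟩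
        intro i hi hiT
        have hiT' : i ∉ T.erase j := fun h => hiT (Finset.mem_of_mem_erase h)
        have := hmax (insert i (T.erase j)) ⟨Finset.insert_subset hi
          ((Finset.erase_subset _ _).trans hT.1), by
            rw [Finset.card_insert_of_notMem hiT', Finset.card_erase_of_mem hj]
            have := Finset.card_pos.mpr hne
            omega⟩
        rw [Finset.sum_insert hiT'] at this
        have h2 := Finset.sum_erase_add T c hj
        have h3 : c i ≤ c j := by linarith
        have := h0 i hi
        nlinarith
  obtain ⟨θ, hθ, hθT, hθI, hθs⟩ := hex
  have e1 : ∑ i ∈ I, c i * w i = ∑ i ∈ I, (c i - θ) * w i + θ * ∑ i ∈ I, w i := by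
    rw [Finset.mul_sum, ← Finset.sum_add_distrib]
    exact Finset.sum_congr rfl fun i _ => by ring
  have e2 : ∑ i ∈ I, (c i - θ) * w i ≤ ∑ i ∈ T, (c i - θ) := by
    rw [← Finset.sum_sdiff hT.1]
    have a1 : ∑ i ∈ I \ T, (c i - θ) * w i ≤ 0 := Finset.sum_nonpos fun i hi => by
      rw [Finset.mem_sdiff] at hi
      exact hθI i hi.1 hi.2
    have a2 : ∑ i ∈ T, (c i - θ) * w i ≤ ∑ i ∈ T, (c i - θ) := Finset.sum_le_sum fun i hi => by
      have := hθT i hi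
      have := h1 i (hT.1 hi)
      nlinarith
    linarith
  have e3 : ∑ i ∈ T, (c i - θ) = ∑ i ∈ T, c i - T.card * θ := by
    rw [Finset.sum_sub_distrib]; simp
  have e4 := mul_le_mul_of_nonneg_left hs hθ
  nlinarith

lemma aux_of_sq {a b : ℝ} (h : a ^ 2 ≤ b ^ 2) (hb : 0 ≤ b) : a ≤ b :=
  (le_abs_self a).trans (abs_le_of_sq_le_sq h hb)

lemma l2_eq {n : ℕ} (x : Fin n → ℝ) : l2 x = ‖WithLp.toLp 2 x‖ := by
  simp [l2, EuclideanSpace.norm_eq]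

lemma l2_nonneg {n : ℕ} (x : Fin n → ℝ) : 0 ≤ l2 x := Real.sqrt_nonneg _

lemma l1_nonneg {n : ℕ} (x : Fin n → ℝ) : 0 ≤ l1 x := Finset.sum_nonneg fun _ _ => abs_nonneg _

lemma l2_sq {n : ℕ} (x : Fin n → ℝ) : l2 x ^ 2 = ∑ i, x i ^ 2 :=
  Real.sq_sqrt (Finset.sum_nonneg fun _ _ => sq_nonneg _)

lemma l2_add_le {n : ℕ} (x y : Fin n → ℝ) : l2 (x + y) ≤ l2 x + l2 y := by
  simp only [l2_eq, WithLp.toLp_add]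
  exact norm_add_le _ _

lemma l2_sub_le {n : ℕ} (x y : Fin n → ℝ) : l2 (x - y) ≤ l2 x + l2 y := by
  simp only [l2_eq, WithLp.toLp_sub]
  exact norm_sub_le _ _

lemma l2_le_l1 {n : ℕ} (x : Fin n → ℝ) : l2 x ≤ l1 x := by
  refine Real.sqrt_le_iff.mpr ⟨l1_nonneg x, ?_⟩
  have := Finset.sum_sq_le_sq_sum_of_nonneg (s := Finset.univ) (f := fun i => |x i|)
    (fun i _ => abs_nonneg _)
  simpa [l1, sq_abs] using this

lemma l2_smul_sq {n : ℕ} (a : ℝ) (x : Fin n → ℝ) : l2 (a • x) ^ 2 = a ^ 2 * l2 x ^ 2 := by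
  simp only [l2_sq, Finset.mul_sum, Pi.smul_apply, smul_eq_mul, mul_pow]

lemma l2_comb_sq {n : ℕ} (a b : ℝ) (x y : Fin n → ℝ) : l2 (a • x + b • y) ^ 2 =
    a ^ 2 * l2 x ^ 2 + 2 * a * b * (∑ i, x i * y i) + b ^ 2 * l2 y ^ 2 := by
  simp only [l2_sq, Finset.mul_sum, ← Finset.sum_add_distrib, Pi.add_apply, Pi.smul_apply,
    smul_eq_mul]
  exact Finset.sum_congr rfl fun i _ => by ring

lemma l1_proj {n : ℕ} (S : Finset (Fin n)) (x : Fin n → ℝ) :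
    l1 (proj S x) = ∑ i ∈ S, |x i| := by
  simp [l1, proj, apply_ite abs]

lemma l1_split {n : ℕ} (S : Finset (Fin n)) (x : Fin n → ℝ) :
    l1 x = ∑ i ∈ S, |x i| + ∑ i ∈ Sᶜ, |x i| := (Finset.sum_add_sum_compl S _).symm

lemma sum_l1_proj {n g : ℕ} (G : Fin g → Finset (Fin n)) (hG : IsPartition G) (x : Fin n → ℝ) :
    ∑ i, l1 (proj (G i) x) = l1 x := by
  simp only [l1]
  rw [Finset.sum_comm]
  refine Finset.sum_congr rfl fun j _ => ?_
  obtain ⟨i, hi⟩ := hG.2.2 j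
  rw [Finset.sum_eq_single i]
  · simp [proj, hi]
  · intro b _ hb
    have : j ∉ G b := fun h => Finset.disjoint_left.mp (hG.2.1 b i hb) h hi
    simp [proj, this]
  · simp

lemma sgl_eq {n g : ℕ} (G : Fin g → Finset (Fin n)) (hG : IsPartition G) (μ : ℝ)
    (x : Fin n → ℝ) :
    sglNorm G μ x = (1 - μ) * l1 x + μ * ∑ i, l2 (proj (G i) x) := by
  rw [sglNorm, Finset.sum_add_distrib, ← Finset.mul_sum, ← Finset.mul_sum, sum_l1_proj G hG]

/-- The cone condition. -/
lemma aux_cone {n g : ℕ} (G : Fin g → Finset (Fin n)) (hG : IsPartition G) (μ : ℝ)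
    (hμ : 0 < μ) (hμ1 : μ < 1) (x xh : Fin n → ℝ) (hle : sglNorm G μ xh ≤ sglNorm G μ x)
    (S : Finset (Fin n)) :
    (1 - μ) * ∑ i ∈ Sᶜ, |(xh - x) i| ≤ (1 - μ) * ∑ i ∈ S, |(xh - x) i|
      + 2 * (1 - μ) * ∑ i ∈ Sᶜ, |x i| + μ * l1 (xh - x) := by
  rw [sgl_eq G hG, sgl_eq G hG] at hle
  have hN : ∑ i, l2 (proj (G i) x) ≤ ∑ i, l2 (proj (G i) xh) + l1 (xh - x) := by
    rw [← sum_l1_proj G hG (xh - x), ← Finset.sum_add_distrib]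
    refine Finset.sum_le_sum fun i _ => ?_
    have e : proj (G i) x = proj (G i) xh - proj (G i) (xh - x) := by
      funext j
      by_cases hj : j ∈ G i <;> simp [proj, hj]
    have h1 := l2_sub_le (proj (G i) xh) (proj (G i) (xh - x))
    rw [← e] at h1
    have h2 := l2_le_l1 (proj (G i) (xh - x))
    linarith
  have h1 : ∑ i ∈ S, |x i| ≤ ∑ i ∈ S, |xh i| + ∑ i ∈ S, |(xh - x) i| := by
    rw [← Finset.sum_add_distrib]
    refine Finset.sum_le_sum fun i _ => ?_
    have := abs_sub (xh i) (xh i - x i)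
    simpa using this
  have h2 : ∑ i ∈ Sᶜ, |(xh - x) i| ≤ ∑ i ∈ Sᶜ, |xh i| + ∑ i ∈ Sᶜ, |x i| := by
    rw [← Finset.sum_add_distrib]
    exact Finset.sum_le_sum fun i _ => abs_sub _ _
  rw [l1_split S x, l1_split S xh] at hle
  have h3 := mul_le_mul_of_nonneg_left hN hμ.le
  have h4 := mul_le_mul_of_nonneg_left h1 (sub_pos.mpr hμ1).le
  have h5 := mul_le_mul_of_nonneg_left h2 (sub_pos.mpr hμ1).le
  linarith

/-- The core estimate. -/
lemma aux_core {m n k tk : ℕ} (hk : 0 < k) (hktk : k < tk) (A : Matrix (Fin m) (Fin n) ℝ)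
    (δ ν : ℝ) (hδ0 : 0 ≤ δ) (hRIP : RIP A tk δ) (hθ : 0 ≤ ν * (1 - ν))
    (h : Fin n → ℝ) (S : Finset (Fin n)) (hS : S.card ≤ k) :
    ∃ X : ℝ, 0 ≤ X ∧ ∑ i ∈ S, (h i) ^ 2 ≤ X ^ 2 ∧
      (ν * (1 - ν) - δ * (1 / 2 - ν * (1 - ν))) * X ^ 2 ≤
        δ * (ν ^ 2 / 2) * ((∑ i ∈ Sᶜ, |h i|) ^ 2 / (tk - k)) +
          ν * (1 - ν) * (Real.sqrt (1 + δ) * X * l2 (A.mulVec h)) := by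
  have hN : (0 : ℝ) < (tk : ℝ) - k := by
    have : (k : ℝ) < tk := by exact_mod_cast hktk
    linarith
  set Q := ∑ i ∈ Sᶜ, |h i| with hQ
  have hQ0 : 0 ≤ Q := Finset.sum_nonneg fun _ _ => abs_nonneg _
  obtain ⟨β, hβ⟩ : ∃ β, β = Q / ((tk : ℝ) - k) := ⟨_, rfl⟩
  have hβ0 : 0 ≤ β := by rw [hβ]; positivity
  have hQβ : Q = ((tk : ℝ) - k) * β := by rw [hβ]; field_simp
  set H := Sᶜ.filter (fun i => β < |h i|) with hH
  set I := Sᶜ.filter (fun i => ¬ β < |h i|) with hI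
  have hsplit : ∑ i ∈ H, |h i| + ∑ i ∈ I, |h i| = Q := Finset.sum_filter_add_sum_filter_not _ _ _
  have hI0 : 0 ≤ ∑ i ∈ I, |h i| := Finset.sum_nonneg fun _ _ => abs_nonneg _
  have hHc : (H.card : ℝ) * β ≤ ∑ i ∈ H, |h i| := by
    rw [← nsmul_eq_mul]
    exact Finset.card_nsmul_le_sum _ _ _ fun i hi => (Finset.mem_filter.mp hi).2.le
  have hHcard : H.card + k ≤ tk := by
    rcases hβ0.eq_or_lt with hb | hb
    · have hQz : Q = 0 := by rw [hQβ, ← hb]; simp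
      have : H = ∅ := by
        apply Finset.eq_empty_of_forall_notMem
        intro i hi
        have h1 := (Finset.mem_filter.mp hi)
        have h2 : |h i| ≤ Q := Finset.single_le_sum (f := fun i => |h i|)
          (fun _ _ => abs_nonneg _) h1.1
        have := h1.2
        linarith
      rw [this]; simp; omega
    · have : (H.card : ℝ) ≤ (tk : ℝ) - k := by
        refine le_of_mul_le_mul_right ?_ hb
        linarith
      have : (H.card : ℝ) + k ≤ tk := by linarith
      exact_mod_cast this
  obtain ⟨s, hs⟩ := Nat.exists_eq_add_of_le hHcard
  have hsR : (tk : ℝ) = H.card + k + s := by exact_mod_cast hs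
  set v : Fin n → ℝ := fun i => if i ∈ S ∪ H then h i else 0 with hv
  set Av := A.mulVec v with hAv
  let L : Fin n → ℝ := fun i => ∑ r, Av r * A r i
  have hL : ∀ u : Fin n → ℝ, ∑ r, Av r * (A.mulVec u) r = ∑ i, L i * u i := by
    intro u
    simp only [Matrix.mulVec, dotProduct, L, Finset.mul_sum, Finset.sum_mul]
    rw [Finset.sum_comm]
    exact Finset.sum_congr rfl fun i _ => Finset.sum_congr rfl fun r _ => by ring
  let sg : Fin n → ℝ := fun i => SignType.sign (h i)
  have hsg : ∀ i, |sg i| ≤ 1 := by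
    intro i
    rcases lt_trichotomy (h i) 0 with h' | h' | h' <;> simp [sg, h']
  have hsgh : ∀ i, sg i * |h i| = h i := fun i => sign_mul_abs (h i)
  obtain ⟨T, hTI, hTs, hTle⟩ := aux_maxlin I (fun i => -(sg i * β * L i)) (fun i => |h i| / β) s
    (fun i _ => by positivity)
    (fun i hi => div_le_one_of_le₀ (not_lt.mp (Finset.mem_filter.mp hi).2) hβ0)
    (by
      rw [← Finset.sum_div]
      apply div_le_of_le_mul₀ hβ0 (by positivity)
      nlinarith)
  set u : Fin n → ℝ := fun i => if i ∈ T then sg i * β else 0 with hu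
  have hdis : ∀ i, i ∈ S ∪ H → i ∉ T := by
    intro i hi hiT
    have h1 := Finset.mem_filter.mp (hTI hiT)
    rcases Finset.mem_union.mp hi with h2 | h2
    · exact (Finset.mem_compl.mp h1.1) h2
    · exact h1.2 (Finset.mem_filter.mp h2).2
  have hvu : ∑ i, v i * u i = 0 := by
    refine Finset.sum_eq_zero fun i _ => ?_
    by_cases hi : i ∈ S ∪ H
    · simp [u, hdis i hi]
    · have h1 : v i = 0 := if_neg hi
      rw [h1, zero_mul]
  have hcard : (S ∪ H ∪ T).card ≤ tk := by
    have h1 := Finset.card_union_le (S ∪ H) T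
    have h2 := Finset.card_union_le S H
    omega
  have hsp : ∀ a b : ℝ, IsSparse tk (a • v + b • u) := by
    intro a b
    refine le_trans (Finset.card_le_card ?_) hcard
    intro i hi
    rw [Finset.mem_filter] at hi
    by_contra hc
    rw [Finset.mem_union, not_or] at hc
    have h1 : v i = 0 := if_neg hc.1
    have h2 : u i = 0 := if_neg hc.2
    exact hi.2 (by simp [h1, h2])
  have hU : l2 u ^ 2 ≤ Q ^ 2 / (tk - k) := by
    have h1 : l2 u ^ 2 = ∑ i ∈ T, (sg i * β) ^ 2 := by
      rw [l2_sq]; simp [u, ite_pow]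
    have h2 : ∑ i ∈ T, (sg i * β) ^ 2 ≤ T.card * β ^ 2 := by
      rw [← nsmul_eq_mul]
      refine Finset.sum_le_card_nsmul _ _ _ fun i _ => ?_
      rw [mul_pow]
      have : sg i ^ 2 ≤ 1 := (sq_le_one_iff_abs_le_one _).mpr (hsg i)
      have := sq_nonneg β
      nlinarith
    have h3 : (T.card : ℝ) ≤ (tk : ℝ) - k := by
      have : (T.card : ℝ) ≤ s := by exact_mod_cast hTs
      have : (0 : ℝ) ≤ H.card := Nat.cast_nonneg _
      linarith
    have h4 : Q ^ 2 / ((tk : ℝ) - k) = ((tk : ℝ) - k) * β ^ 2 := by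
      rw [div_eq_iff hN.ne']
      calc Q ^ 2 = (((tk : ℝ) - k) * β) ^ 2 := congrArg (· ^ 2) hQβ
        _ = _ := by ring
    rw [h1, h4]
    exact h2.trans (mul_le_mul_of_nonneg_right h3 (sq_nonneg _))
  have hLu : ∑ i, L i * u i ≤ ∑ i, L i * (h i - v i) := by
    have h1 : ∑ i, L i * u i = ∑ i ∈ T, sg i * β * L i := by
      simp only [u, mul_ite, mul_zero, Finset.sum_ite_mem, Finset.univ_inter]
      exact Finset.sum_congr rfl fun i _ => by ring
    have h2 : ∑ i, L i * (h i - v i) = ∑ i ∈ I, L i * h i := by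
      rw [← Finset.sum_subset (Finset.subset_univ I)]
      · refine Finset.sum_congr rfl fun i hi => ?_
        have h1 := Finset.mem_filter.mp hi
        have : i ∉ S ∪ H := by
          rw [Finset.mem_union, not_or]
          exact ⟨Finset.mem_compl.mp h1.1, fun h2 => h1.2 (Finset.mem_filter.mp h2).2⟩
        have h3 : v i = 0 := if_neg this
        rw [h3, sub_zero]
      · intro i _ hi
        have : i ∈ S ∪ H := by
          by_contra hc
          rw [Finset.mem_union, not_or] at hc
          refine hi (Finset.mem_filter.mpr ⟨Finset.mem_compl.mpr hc.1, fun h2 =>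
            hc.2 (Finset.mem_filter.mpr ⟨Finset.mem_compl.mpr hc.1, h2⟩)⟩)
        have hvi : v i = h i := if_pos this
        rw [hvi]; simp
    have h3 : ∑ i ∈ I, -(sg i * β * L i) * (|h i| / β) = -∑ i ∈ I, L i * h i := by
      rw [← Finset.sum_neg_distrib]
      refine Finset.sum_congr rfl fun i hi => ?_
      have h1 := not_lt.mp (Finset.mem_filter.mp hi).2
      rcases hβ0.eq_or_lt with hb | hb
      · have : h i = 0 := abs_eq_zero.mp (le_antisymm (by rw [hb]; exact h1) (abs_nonneg _))
        simp [this]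
      · have h5 : -(sg i * β * L i) * (|h i| / β) = -(L i * (sg i * |h i|)) := by
          field_simp
        rw [h5, hsgh]
    rw [h1, h2]
    rw [h3, Finset.sum_neg_distrib] at hTle
    linarith
  have hlin : ∀ a b : ℝ, A.mulVec (a • v + b • u) = a • Av + b • A.mulVec u := by
    intro a b
    rw [Matrix.mulVec_add, Matrix.mulVec_smul, Matrix.mulVec_smul]
  have hp := (hRIP _ (hsp (1 / 2 - ν) (-(ν / 2)))).2
  have hq := (hRIP _ (hsp 1 ν)).1
  have hvv := (hRIP _ (hsp 1 0)).2
  rw [hlin, l2_comb_sq, l2_comb_sq, hvu] at hp hq hvv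
  refine ⟨l2 v, l2_nonneg _, ?_, ?_⟩
  · rw [l2_sq]
    refine le_trans (le_of_eq ?_) (Finset.sum_le_sum_of_subset_of_nonneg (Finset.subset_univ S)
      fun i _ _ => sq_nonneg _)
    refine Finset.sum_congr rfl fun i hi => ?_
    have : v i = h i := if_pos (Finset.mem_union_left _ hi)
    rw [this]
  · have hAvle : l2 Av ≤ Real.sqrt (1 + δ) * l2 v := by
      refine aux_of_sq ?_ (by have := l2_nonneg v; positivity)
      rw [mul_pow, Real.sq_sqrt (by linarith)]
      linarith
    have hCS : ∑ r, Av r * (A.mulVec h) r ≤ l2 Av * l2 (A.mulVec h) :=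
      Real.sum_mul_le_sqrt_mul_sqrt _ _ _
    have hCS2 : l2 Av * l2 (A.mulVec h) ≤ Real.sqrt (1 + δ) * l2 v * l2 (A.mulVec h) :=
      mul_le_mul_of_nonneg_right hAvle (l2_nonneg _)
    have hvv2 : l2 Av ^ 2 = ∑ i, L i * v i := by
      rw [← hL, l2_sq]
      exact Finset.sum_congr rfl fun i _ => by rw [← hAv]; ring
    have hsub : ∑ i, L i * (h i - v i) = ∑ i, L i * h i - ∑ i, L i * v i := by
      rw [← Finset.sum_sub_distrib]
      exact Finset.sum_congr rfl fun i _ => by ring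
    have hmain : l2 Av ^ 2 + ∑ r, Av r * (A.mulVec u) r ≤
        Real.sqrt (1 + δ) * l2 v * l2 (A.mulVec h) := by
      rw [hL] at hCS ⊢
      linarith
    have hm2 := mul_le_mul_of_nonneg_left hmain hθ
    have hU2 := mul_le_mul_of_nonneg_left hU (show 0 ≤ δ * (ν ^ 2 / 2) by positivity)
    nlinarith

set_option maxHeartbeats 2000000 in
/-- Robust sparse recovery for SGL under a bound on `δ` derived from `μ`. -/
theorem stmt16 (m n g k tk : ℕ) (hk : 0 < k) (t : ℝ) (ht : 4 / 3 ≤ t) (htk : 0 < tk)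
    (htkeq : (tk : ℝ) = t * k)
    (ν θ₁ θ₂ θ₃ : ℝ)
    (hν : ν = Real.sqrt (t * (t - 1)) - (t - 1))
    (hθ₁ : θ₁ = ν * (1 - ν)) (hθ₂ : θ₂ = 0.5 - θ₁)
    (hθ₃ : θ₃ = ν ^ 2 / (2 * (t - 1)))
    (G : Fin g → Finset (Fin n)) (hG : IsPartition G)
    (μ : ℝ) (hμ : 0 < μ) (hμg : μ * Real.sqrt g < 1 - μ)
    (γ ρbar : ℝ) (hγ : γ = μ * Real.sqrt g / (1 - μ)) (hρbar : ρbar = (1 - γ) / (1 + γ))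
    (A : Matrix (Fin m) (Fin n) ℝ) (δ : ℝ) (hδ0 : 0 ≤ δ)
    (hRIP : RIP A tk δ)
    (hδ : δ < ρbar ^ 2 * θ₁ / (θ₃ + ρbar ^ 2 * θ₂)) :
    ∃ C₀ C₁ : ℝ, ∀ x : Fin n → ℝ, ∀ ε : ℝ, 0 ≤ ε → ∀ η : Fin m → ℝ, l2 η ≤ ε →
      ∀ y : Fin m → ℝ, y = A.mulVec x + η →
      ∀ xh : Fin n → ℝ,
        (l2 (A.mulVec xh - y) ≤ ε ∧
          ∀ z : Fin n → ℝ, l2 (A.mulVec z - y) ≤ ε → sglNorm G μ xh ≤ sglNorm G μ z) →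
        l1 (xh - x) ≤ C₀ * sigma1 k x + C₁ * ε := by
  have hk' : (0 : ℝ) < k := by exact_mod_cast hk
  have hμ1 : μ < 1 := by
    have : 0 ≤ μ * Real.sqrt g := by positivity
    linarith
  have hγ0 : 0 ≤ γ := by
    rw [hγ]; exact div_nonneg (by positivity) (by linarith)
  have hγ1 : γ < 1 := by
    rw [hγ, div_lt_one (by linarith)]; exact hμg
  have hρ0 : 0 < ρbar := by
    rw [hρbar]; exact div_pos (by linarith) (by linarith)
  have hρeq : ρbar * (1 + γ) = 1 - γ := by
    rw [hρbar]; field_simp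
  have hsq : Real.sqrt (t * (t - 1)) ^ 2 = t * (t - 1) := Real.sq_sqrt (by nlinarith)
  have hs0 := Real.sqrt_nonneg (t * (t - 1))
  have hν0 : 0 < ν := by
    rw [hν]; nlinarith
  have hν1 : ν < 1 := by
    rw [hν]; nlinarith
  have hθ₁0 : 0 < θ₁ := by
    rw [hθ₁]; exact mul_pos hν0 (by linarith)
  have hθ₂0 : 0 < θ₂ := by
    rw [hθ₂, hθ₁]; nlinarith [sq_nonneg (ν - 1 / 2)]
  have hθ₃0 : 0 < θ₃ := by
    rw [hθ₃]; exact div_pos (by positivity) (by linarith)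
  rw [lt_div_iff₀ (by positivity)] at hδ
  obtain ⟨a, ha⟩ : ∃ a, a = θ₁ - δ * θ₂ := ⟨_, rfl⟩
  have hδ3 : δ * θ₃ < ρbar ^ 2 * a := by rw [ha]; linarith
  have ha0 : 0 < a := by
    have : 0 ≤ δ * θ₃ := by positivity
    exact pos_of_mul_pos_right (lt_of_le_of_lt this hδ3) (by positivity)
  obtain ⟨r, hr⟩ : ∃ r, r = Real.sqrt (δ * θ₃ / a) := ⟨_, rfl⟩
  have hr0 : 0 ≤ r := by rw [hr]; positivity
  have hr2 : a * r ^ 2 = δ * θ₃ := by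
    rw [hr, Real.sq_sqrt (by positivity)]; field_simp
  have hrρ : r < ρbar := by
    rw [hr, Real.sqrt_lt' hρ0, div_lt_iff₀ ha0]; exact hδ3
  obtain ⟨b, hb⟩ : ∃ b, b = θ₁ * Real.sqrt (1 + δ) / a := ⟨_, rfl⟩
  have hb0 : 0 ≤ b := by rw [hb]; positivity
  have hab : a * b = θ₁ * Real.sqrt (1 + δ) := by rw [hb]; field_simp
  have hktk : k < tk := by
    have : (k : ℝ) < tk := by rw [htkeq]; nlinarith
    exact_mod_cast this
  obtain ⟨τ, hτ⟩ : ∃ τ, τ = Real.sqrt k * b := ⟨_, rfl⟩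
  have hτ0 : 0 ≤ τ := by rw [hτ]; positivity
  have hsk : 0 < Real.sqrt k := Real.sqrt_pos.mpr hk'
  have hsk2 : Real.sqrt k ^ 2 = k := Real.sq_sqrt hk'.le
  have hNSP : ∀ h : Fin n → ℝ, ∀ S : Finset (Fin n), S.card ≤ k →
      ∑ i ∈ S, |h i| ≤ r * ∑ i ∈ Sᶜ, |h i| + τ * l2 (A.mulVec h) := by
    intro h S hS
    obtain ⟨X, hX0, hSX, hX⟩ := aux_core hk hktk A δ ν hδ0 hRIP (by rw [← hθ₁]; exact hθ₁0.le) h S hS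
    have hE0 := l2_nonneg (A.mulVec h)
    set E := l2 (A.mulVec h)
    have hQ0 : 0 ≤ ∑ i ∈ Sᶜ, |h i| := Finset.sum_nonneg fun _ _ => abs_nonneg _
    set Q := ∑ i ∈ Sᶜ, |h i|
    obtain ⟨P, hP⟩ : ∃ P, P = Q / Real.sqrt k := ⟨_, rfl⟩
    have hP0 : 0 ≤ P := by rw [hP]; positivity
    have hPQ : Real.sqrt k * P = Q := by rw [hP]; field_simp
    have e1 : δ * (ν ^ 2 / 2) * (Q ^ 2 / (tk - k)) = a * (r * P) ^ 2 := by
      have ht1 : t - 1 ≠ 0 := by linarith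
      have : (tk : ℝ) - k = (t - 1) * Real.sqrt k ^ 2 := by rw [hsk2, htkeq]; ring
      rw [this, mul_pow, ← mul_assoc, hr2, hP, hθ₃]
      field_simp
    have e2 : ν * (1 - ν) * (Real.sqrt (1 + δ) * X * E) = a * (b * X * E) := by
      rw [← hθ₁]; linear_combination (-X * E) * hab
    have e3 : ν * (1 - ν) - δ * (1 / 2 - ν * (1 - ν)) = a := by
      rw [ha, hθ₂, hθ₁]; norm_num
    rw [e1, e2, e3, ← mul_add] at hX
    have hX2 := le_of_mul_le_mul_left hX ha0
    have hXle : X ≤ r * P + b * E := by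
      by_contra hc
      push Not at hc
      have g1 : 0 ≤ r * P := by positivity
      have g2 : 0 ≤ b * E := by positivity
      have g3 : r * P < X := by linarith
      have g4 : 0 < X := by linarith
      have g5 : X * (r * P + b * E) < X * X := mul_lt_mul_of_pos_left hc g4
      have g6 : (r * P) * (r * P) ≤ X * (r * P) := mul_le_mul_of_nonneg_right g3.le g1
      linarith [hX2, show X ^ 2 = X * X by ring, show (r * P) ^ 2 = (r * P) * (r * P) by ring]
    have hCS : (∑ i ∈ S, |h i|) ^ 2 ≤ (Real.sqrt k * X) ^ 2 := by
      have := sq_sum_le_card_mul_sum_sq (s := S) (f := fun i => |h i|)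
      simp only [sq_abs] at this
      refine this.trans ?_
      rw [mul_pow, hsk2]
      have hSr : (S.card : ℝ) ≤ k := by exact_mod_cast hS
      exact mul_le_mul hSr hSX (Finset.sum_nonneg fun _ _ => sq_nonneg _) hk'.le
    have hle := aux_of_sq hCS (by positivity)
    have := mul_le_mul_of_nonneg_left hXle hsk.le
    rw [hτ]
    calc _ ≤ _ := hle
      _ ≤ _ := this
      _ = r * (Real.sqrt k * P) + Real.sqrt k * b * E := by ring
      _ = _ := by rw [hPQ]
  obtain ⟨D, hD⟩ : ∃ D, D = (1 + r) / (ρbar - r) := ⟨_, rfl⟩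
  have hρr : 0 < ρbar - r := by linarith
  have hD0 : 0 < D := by rw [hD]; positivity
  refine ⟨2 * D, 2 * τ * (D + 1), ?_⟩
  intro x ε hε η hη y hy xh ⟨hfe, hmin⟩
  suffices hz : ∀ z : Fin n → ℝ, IsSparse k z →
      l1 (xh - x) ≤ 2 * D * l1 (x - z) + 2 * τ * (D + 1) * ε by
    have h1 : (l1 (xh - x) - 2 * τ * (D + 1) * ε) / (2 * D) ≤ sigma1 k x := by
      refine le_csInf ⟨_, 0, by simp [IsSparse], rfl⟩ ?_
      rintro _ ⟨z, hz1, rfl⟩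
      rw [div_le_iff₀ (by positivity)]
      have := hz z hz1
      simp only
      linarith
    rw [div_le_iff₀ (by positivity)] at h1
    linarith
  intro z hzs
  have hfx : sglNorm G μ xh ≤ sglNorm G μ x := by
    refine hmin x ?_
    have e : A.mulVec x - y = 0 - η := by rw [hy]; abel
    rw [e]
    refine (l2_sub_le 0 η).trans ?_
    simpa [l2] using hη
  have hE : l2 (A.mulVec (xh - x)) ≤ 2 * ε := by
    have e : A.mulVec (xh - x) = (A.mulVec xh - y) + η := by
      rw [Matrix.mulVec_sub, hy]; abel
    rw [e]
    have := l2_add_le (A.mulVec xh - y) η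
    linarith
  have hzN : 0 ≤ l1 (x - z) := l1_nonneg _
  rcases Nat.eq_zero_or_pos g with hg | hg
  · subst hg
    have : l1 (xh - x) = 0 := by
      rw [← sum_l1_proj G hG]; simp
    rw [this]; positivity
  have hg1 : (1 : ℝ) ≤ Real.sqrt g := by
    rw [Real.one_le_sqrt]; exact_mod_cast hg
  have hμγ : μ ≤ γ * (1 - μ) := by
    have : 1 - μ ≠ 0 := by linarith
    rw [hγ, div_mul_cancel₀ _ this]; nlinarith
  set S := Finset.univ.filter (fun i => z i ≠ 0) with hSdef
  have hcone := aux_cone G hG μ hμ hμ1 x xh hfx S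
  have hnsp := hNSP (xh - x) S hzs
  have hxz : ∑ i ∈ Sᶜ, |x i| ≤ l1 (x - z) := by
    rw [l1_split S (x - z)]
    have h1 : 0 ≤ ∑ i ∈ S, |(x - z) i| := Finset.sum_nonneg fun _ _ => abs_nonneg _
    have h2 : ∑ i ∈ Sᶜ, |(x - z) i| = ∑ i ∈ Sᶜ, |x i| := by
      refine Finset.sum_congr rfl fun i hi => ?_
      have : z i = 0 := by simpa [S] using hi
      simp [this]
    linarith
  rw [l1_split S (xh - x)] at hcone ⊢
  have hP0 : 0 ≤ ∑ i ∈ S, |(xh - x) i| := Finset.sum_nonneg fun _ _ => abs_nonneg _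
  have hQ0 : 0 ≤ ∑ i ∈ Sᶜ, |(xh - x) i| := Finset.sum_nonneg fun _ _ => abs_nonneg _
  generalize ∑ i ∈ S, |(xh - x) i| = P at *
  generalize ∑ i ∈ Sᶜ, |(xh - x) i| = Q at *
  generalize ∑ i ∈ Sᶜ, |x i| = σ at *
  generalize l1 (x - z) = Z at *
  have c1 : Q ≤ P + 2 * Z + γ * (P + Q) := by
    have h1 := mul_le_mul_of_nonneg_right hμγ (add_nonneg hP0 hQ0)
    have h2 := mul_le_mul_of_nonneg_left hxz (show 0 ≤ 2 * (1 - μ) by linarith)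
    refine le_of_mul_le_mul_left (a := 1 - μ) ?_ (by linarith)
    linarith
  have c2 : ρbar * Q ≤ P + 2 * Z := by
    refine le_of_mul_le_mul_left (a := 1 + γ) ?_ (by linarith)
    have h1 : (1 + γ) * (ρbar * Q) = (1 - γ) * Q := by rw [← hρeq]; ring
    have h2 : 0 ≤ γ * Z := by positivity
    rw [h1]; linarith
  have c3 : τ * l2 (A.mulVec (xh - x)) ≤ τ * (2 * ε) := mul_le_mul_of_nonneg_left hE hτ0
  have c4 : (ρbar - r) * Q ≤ 2 * Z + τ * (2 * ε) := by linarith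
  have c5 : (1 + r) * Q ≤ D * (2 * Z + τ * (2 * ε)) := by
    have h1 : D * (ρbar - r) = 1 + r := by rw [hD]; field_simp
    rw [← h1, mul_assoc]
    exact mul_le_mul_of_nonneg_left c4 hD0.le
  linarith
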